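/- For every integer k ≥ 2, the sequences of exactly 2k edge editions and vertex splittings that transform the cycle C_{6k} with consecutive vertices v_1, …, v_{6k} into a disjoint union of bicliques are exactly the following three sequences of edge deletions: delete the edges v_{1+3i} v_{2+3i} for every i with 0 ≤ i ≤ 2k−1; delete the edges v_{2+3i} v_{3+3i} for every such i; delete the edges v_{3+3i} v_{4+3i} for every such i (indices taken modulo 6k). -/

import Mathlib

/- Common framework: bipartite graphs on vertex set `ℕ` with side labels,
   edge editions, vertex splittings, and the bicluster-editing numbers. -/

namespace BCE

/-- A graph on a finite subset of `ℕ` equipped with a labelling of its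
vertices into two sides `A` and `B`. -/
structure BGraph where
  A : Set ℕ
  B : Set ℕ
  finA : A.Finite
  finB : B.Finite
  Adj : ℕ → ℕ → Prop
  symm : ∀ u v, Adj u v → Adj v u

/-- The vertex set of a graph. -/
def verts (G : BGraph) : Set ℕ := G.A ∪ G.B

/-- The open neighbourhood of a vertex. -/
def nbhd (G : BGraph) (v : ℕ) : Set ℕ := {u | G.Adj v u}

/-- `G = (A, B, E)` is bipartite: the sides are disjoint and every edge joins
a vertex of `A` with a vertex of `B`. -/
def Bipartite (G : BGraph) : Prop :=
  Disjoint G.A G.B ∧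
    ∀ u v, G.Adj u v → (u ∈ G.A ∧ v ∈ G.B) ∨ (u ∈ G.B ∧ v ∈ G.A)

/-- A (bipartite) graph is a disjoint union of bicliques iff whenever
`a-b-c-d` is a walk, `a` and `d` are adjacent (equivalently, every connected
component is a complete bipartite graph). -/
def IsBicliqueUnion (G : BGraph) : Prop :=
  ∀ a b c d, G.Adj a b → G.Adj b c → G.Adj c d → G.Adj a d

/-- The editing operations: deletion of an edge, addition of an edge, and
splitting of a vertex `v` into `v` and a fresh vertex `v'` whose
neighbourhoods `N1`, `N2` cover the neighbourhood of `v`. -/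
inductive Op where
  | del : ℕ → ℕ → Op
  | add : ℕ → ℕ → Op
  | split : ℕ → ℕ → Set ℕ → Set ℕ → Op

/-- `op` is a vertex splitting. -/
def IsSplitOp : Op → Prop
  | Op.split _ _ _ _ => True
  | _ => False

/-- `OpStep sA sB op G G'` : performing the single operation `op` on `G`
yields `G'`; vertex splittings are allowed on side `A` (resp. `B`) only if
`sA` (resp. `sB`) is `true`.  A copy created by a splitting is put on the
same side as the split vertex. -/
inductive OpStep (sA sB : Bool) : Op → BGraph → BGraph → Prop where
  | del {G G' : BGraph} {u v : ℕ}
      (h : G.Adj u v) (hA : G'.A = G.A) (hB : G'.B = G.B)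
      (hadj : ∀ x y, G'.Adj x y ↔
        (G.Adj x y ∧ ¬((x = u ∧ y = v) ∨ (x = v ∧ y = u)))) :
      OpStep sA sB (Op.del u v) G G'
  | add {G G' : BGraph} {u v : ℕ}
      (hu : u ∈ G.A) (hv : v ∈ G.B) (h : ¬ G.Adj u v)
      (hA : G'.A = G.A) (hB : G'.B = G.B)
      (hadj : ∀ x y, G'.Adj x y ↔
        (G.Adj x y ∨ (x = u ∧ y = v) ∨ (x = v ∧ y = u))) :
      OpStep sA sB (Op.add u v) G G'
  | split {G G' : BGraph} {v v' : ℕ} {N1 N2 : Set ℕ}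
      (hside : (v ∈ G.A ∧ sA = true) ∨ (v ∈ G.B ∧ sB = true))
      (hfresh : v' ∉ verts G)
      (hcover : N1 ∪ N2 = nbhd G v)
      (hA : v ∈ G.A → G'.A = insert v' G.A ∧ G'.B = G.B)
      (hB : v ∈ G.B → G'.A = G.A ∧ G'.B = insert v' G.B)
      (hadj : ∀ x y, G'.Adj x y ↔
        ((G.Adj x y ∧ x ≠ v ∧ y ≠ v) ∨ (x = v ∧ y ∈ N1) ∨ (y = v ∧ x ∈ N1) ∨
          (x = v' ∧ y ∈ N2) ∨ (y = v' ∧ x ∈ N2))) :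
      OpStep sA sB (Op.split v v' N1 N2) G G'

/-- `ApplySeq sA sB L G G'` : applying the sequence of operations `L`
to `G` yields `G'`. -/
def ApplySeq (sA sB : Bool) : List Op → BGraph → BGraph → Prop
  | [], G, G' => G' = G
  | op :: L, G, G'' => ∃ G', OpStep sA sB op G G' ∧ ApplySeq sA sB L G' G''

/-- The sequence `L` transforms `G` into a disjoint union of bicliques. -/
def Solves (sA sB : Bool) (L : List Op) (G : BGraph) : Prop :=
  ∃ G', ApplySeq sA sB L G G' ∧ IsBicliqueUnion G'

/-- `bcevs G` : the minimum length of a sequence of edge editions and vertex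
splittings transforming `G` into a disjoint union of bicliques. -/
noncomputable def bcevs (G : BGraph) : ℕ :=
  sInf {n | ∃ L, L.length = n ∧ Solves true true L G}

/-- `bceovs G` (that is, `bceovs(G, A)`) : the minimum length of such a
sequence in which vertex splittings are applied only to vertices of the side
`A` (and their copies, which are also on side `A`). -/
noncomputable def bceovs (G : BGraph) : ℕ :=
  sInf {n | ∃ L, L.length = n ∧ Solves true false L G}

/-- The subgraph of `G` induced by `S`. -/
def induce (G : BGraph) (S : Set ℕ) : BGraph where
  A := G.A ∩ S
  B := G.B ∩ S
  finA := G.finA.subset Set.inter_subset_left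
  finB := G.finB.subset Set.inter_subset_left
  Adj := fun u v => G.Adj u v ∧ u ∈ S ∧ v ∈ S
  symm := fun u v h => ⟨G.symm u v h.1, h.2.2, h.2.1⟩

/-- `G` is a tree (as an abstract graph on its vertex set). -/
def IsTreeB (G : BGraph) : Prop :=
  (SimpleGraph.induce (verts G) (SimpleGraph.fromRel G.Adj)).IsTree

/-- `G` is connected. -/
def ConnectedB (G : BGraph) : Prop :=
  (SimpleGraph.induce (verts G) (SimpleGraph.fromRel G.Adj)).Connected

/-- The set `S` induces a biclique in `G`: every vertex of `S` on side `A` is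
adjacent to every vertex of `S` on side `B`. -/
def IsBicliqueOn (G : BGraph) (S : Set ℕ) : Prop :=
  ∀ u ∈ S ∩ G.A, ∀ v ∈ S ∩ G.B, G.Adj u v

/-- The set `S` induces a star in `G`: some centre `c ∈ S` is adjacent to all
other vertices of `S`, and every edge inside `S` uses the centre. -/
def IsStarOn (G : BGraph) (S : Set ℕ) : Prop :=
  ∃ c ∈ S, (∀ v ∈ S, v ≠ c → G.Adj c v) ∧
    (∀ u ∈ S, ∀ v ∈ S, G.Adj u v → u = c ∨ v = c)

/-- An `A`-partitioning cover of `G`: a collection of subsets of `A ∪ B`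
covering all vertices whose traces on `A` form a partition of `A` (every
vertex of `A` lies in a unique member of the collection). -/
def IsAPartCover (G : BGraph) (C : Set (Set ℕ)) : Prop :=
  (∀ X ∈ C, X ⊆ verts G) ∧
  (∀ v ∈ verts G, ∃ X ∈ C, v ∈ X) ∧
  (∀ a ∈ G.A, ∃! X, X ∈ C ∧ a ∈ X)

/-- The cost of an `A`-partitioning cover: each `a ∈ A` lying in the unique
set `X ∈ C` costs `|(B ∩ X) \ N(a)| + |N(a) \ X|`; each `b ∈ B` lying in `j`
members of `C` costs `j - 1`. -/
noncomputable def coverCost (G : BGraph) (C : Set (Set ℕ)) : ℕ :=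
  (∑ᶠ a ∈ G.A, ∑ᶠ X ∈ {X ∈ C | a ∈ X},
      (((G.B ∩ X) \ nbhd G a).ncard + ((nbhd G a) \ X).ncard)) +
  ∑ᶠ b ∈ G.B, ({X ∈ C | b ∈ X}.ncard - 1)

/-- The twin class of a vertex: all vertices of `G` with the same open
neighbourhood. -/
def twinClass (G : BGraph) (v : ℕ) : Set ℕ :=
  {u ∈ verts G | nbhd G u = nbhd G v}

/-- The twin classes of `G`. -/
def twinClasses (G : BGraph) : Set (Set ℕ) :=
  {T | ∃ v ∈ verts G, T = twinClass G v}

/-- A cover is twin-adapted if every member contains each twin class either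
entirely or not at all. -/
def TwinAdapted (G : BGraph) (C : Set (Set ℕ)) : Prop :=
  ∀ T ∈ twinClasses G, ∀ X ∈ C, T ∩ X = ∅ ∨ T ⊆ X

/-- `G` is a cycle with consecutive vertices `p 0, p 1, …, p (m-1)`
(indices modulo `m`), the vertices of even index forming side `A`. -/
def IsCycleWith (G : BGraph) (p : ℕ → ℕ) (m : ℕ) : Prop :=
  (∀ i j, i < m → j < m → p i = p j → i = j) ∧
  G.A = p '' {i | i < m ∧ i % 2 = 0} ∧
  G.B = p '' {i | i < m ∧ i % 2 = 1} ∧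
  (∀ x y, G.Adj x y ↔ ∃ i < m,
    (x = p i ∧ y = p ((i + 1) % m)) ∨ (y = p i ∧ x = p ((i + 1) % m)))

/-- `G` is a path with `l` edges and consecutive vertices `p 0, …, p l`,
the vertices of even index forming side `A`. -/
def IsPathWith (G : BGraph) (p : ℕ → ℕ) (l : ℕ) : Prop :=
  (∀ i j, i ≤ l → j ≤ l → p i = p j → i = j) ∧
  G.A = p '' {i | i ≤ l ∧ i % 2 = 0} ∧
  G.B = p '' {i | i ≤ l ∧ i % 2 = 1} ∧
  (∀ x y, G.Adj x y ↔ ∃ i < l,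
    (x = p i ∧ y = p (i + 1)) ∨ (y = p i ∧ x = p (i + 1)))

end BCE

/-!
An obstruction is a walk with three edges and nonadjacent ends, so a disjoint union of bicliques is
a graph without obstructions. The cycle of length `3l` has one along each of its `3l` windows of
three consecutive edges. A deletion destroys at most three of these, an addition at most two, namely
those whose ends it joins, and a splitting at most two, namely those having the split vertex in the
interior. Hence at most `l` operations can succeed only if they are `l` deletions. The set `D` of
deleted edges has to meet every window, so `D` and `{0, -1, -2}` tile `ℤ/3l`. As then neither
`i + 1` nor `i + 2` lies in `D` for `i ∈ D`, the window at `i + 1` yields `i + 3 ∈ D`, and `D` is a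
residue class modulo `3`.
-/

namespace BCE

open Finset

section Residues

theorem eq_of_add_mem_of_card_mul_card_le {R : Type*} [AddGroup R] [Fintype R] {D W : Finset R}
    (hcard : #D * #W ≤ Fintype.card R) (hmeet : ∀ x, ∃ w ∈ W, x + w ∈ D) {x w w' : R}
    (hw : w ∈ W) (hw' : w' ∈ W) (h : x + w ∈ D) (h' : x + w' ∈ D) : w = w' := by
  have hsurj : Set.SurjOn (fun t : R × R => t.1 - t.2) ↑(D ×ˢ W) ↑(univ : Finset R) := by
    intro y _
    obtain ⟨v, hv, hyv⟩ := hmeet y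
    exact ⟨(y + v, v), by simp [hv, hyv], by simp⟩
  have hinj := injOn_of_surjOn_of_card_le _ (fun _ _ => mem_univ _) hsurj
    (by rwa [card_product, card_univ])
  have heq : (x + w, w) = (x + w', w') :=
    hinj (by simp [hw, h]) (by simp [hw', h']) (by simp)
  exact congrArg Prod.snd heq

theorem natCast_ne_zero {m n : ℕ} (hn : n ≠ 0) (hnm : n < m) : (n : ZMod m) ≠ 0 := by
  rw [Ne, ZMod.natCast_eq_zero_iff]
  exact Nat.not_dvd_of_pos_of_lt (Nat.pos_of_ne_zero hn) hnm

/-- The residues modulo `3 * l` that are congruent to `r` modulo `3`, for `r < 3`. -/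
def residueClass (l r : ℕ) : Finset (ZMod (3 * l)) :=
  (range l).image fun i => ((r + 3 * i : ℕ) : ZMod (3 * l))

variable {l r : ℕ}

theorem card_residueClass (hr : r < 3) : #(residueClass l r) = l := by
  rw [residueClass, card_image_of_injOn, card_range]
  intro i hi j hj hij
  simp only [coe_range, Set.mem_Iio] at hi hj
  have := CharP.natCast_injOn_Iio (ZMod (3 * l)) (3 * l) (by grind) (by grind) hij
  omega

theorem natCast_mem_residueClass [NeZero l] (n : ℕ) :
    (n : ZMod (3 * l)) ∈ residueClass l (n % 3) := by
  have hl := NeZero.pos l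
  have hn : n % (3 * l) < 3 * l := Nat.mod_lt _ (by omega)
  have hmod : n % (3 * l) % 3 = n % 3 := Nat.mod_mod_of_dvd _ (Nat.dvd_mul_right 3 l)
  refine mem_image.2 ⟨n % (3 * l) / 3, mem_range.2 (by omega), ?_⟩
  rw [show n % 3 + 3 * (n % (3 * l) / 3) = n % (3 * l) by omega, ZMod.natCast_mod]

theorem mem_or_add_one_mem_or_add_two_mem_residueClass [NeZero l] (hr : r < 3) (i : ZMod (3 * l)) :
    i ∈ residueClass l r ∨ i + 1 ∈ residueClass l r ∨ i + 2 ∈ residueClass l r := by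
  have h0 := natCast_mem_residueClass (l := l) i.val
  have h1 := natCast_mem_residueClass (l := l) (i.val + 1)
  have h2 := natCast_mem_residueClass (l := l) (i.val + 2)
  push_cast [ZMod.natCast_zmod_val] at h0 h1 h2
  have hval : i.val % 3 = r ∨ (i.val + 1) % 3 = r ∨ (i.val + 2) % 3 = r := by omega
  rcases hval with h | h | h
  · exact Or.inl (h ▸ h0)
  · exact Or.inr (Or.inl (h ▸ h1))
  · exact Or.inr (Or.inr (h ▸ h2))

theorem add_three_mem_of_forall_window [NeZero l] {D : Finset (ZMod (3 * l))} (hD : #D ≤ l)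
    (hwin : ∀ i, i ∈ D ∨ i + 1 ∈ D ∨ i + 2 ∈ D) {i : ZMod (3 * l)} (hi : i ∈ D) : i + 3 ∈ D := by
  have hl := NeZero.pos l
  have hmeet : ∀ j, ∃ w ∈ ({0, 1, 2} : Finset (ZMod (3 * l))), j + w ∈ D := by simpa using hwin
  have hcard : #D * #({0, 1, 2} : Finset (ZMod (3 * l))) ≤ Fintype.card (ZMod (3 * l)) := calc
    _ ≤ l * 3 := Nat.mul_le_mul hD card_le_three
    _ = Fintype.card (ZMod (3 * l)) := by rw [ZMod.card, mul_comm]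
  have hunique {w} (hw : w ∈ ({0, 1, 2} : Finset (ZMod (3 * l)))) (hiw : i + w ∈ D) : 0 = w :=
    eq_of_add_mem_of_card_mul_card_le hcard hmeet (by simp) hw (by simpa using hi) hiw
  have h1 : i + 1 ∉ D := fun h => natCast_ne_zero (m := 3 * l) one_ne_zero (by omega)
    (by simpa using (hunique (by simp) h).symm)
  have h2 : i + 2 ∉ D := fun h => natCast_ne_zero (m := 3 * l) two_ne_zero (by omega)
    (by simpa using (hunique (by simp) h).symm)
  have h := hwin (i + 1)
  rw [show i + 1 + 1 = i + 2 by ring, show i + 1 + 2 = i + 3 by ring] at h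
  exact (h.resolve_left h1).resolve_left h2

theorem forall_window_iff_exists_eq_residueClass [NeZero l] {D : Finset (ZMod (3 * l))}
    (hD : #D ≤ l) :
    (∀ i, i ∈ D ∨ i + 1 ∈ D ∨ i + 2 ∈ D) ↔ ∃ r < 3, D = residueClass l r := by
  constructor
  · intro hwin
    obtain ⟨r, hr, hrD⟩ : ∃ r : ℕ, r < 3 ∧ (r : ZMod (3 * l)) ∈ D := by
      rcases hwin 0 with h | h | h
      · exact ⟨0, by omega, by simpa using h⟩
      · exact ⟨1, by omega, by simpa using h⟩
      · exact ⟨2, by omega, by simpa using h⟩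
    have hprog (i : ℕ) : ((r + 3 * i : ℕ) : ZMod (3 * l)) ∈ D := by
      induction i with
      | zero => simpa using hrD
      | succ i ih =>
        rw [mul_add_one, ← add_assoc, Nat.cast_add]
        exact add_three_mem_of_forall_window hD hwin ih
    have hsub : residueClass l r ⊆ D := image_subset_iff.2 fun i _ => hprog i
    exact ⟨r, hr, (eq_of_subset_of_card_le hsub (by rwa [card_residueClass hr])).symm⟩
  · rintro ⟨r, hr, rfl⟩
    exact mem_or_add_one_mem_or_add_two_mem_residueClass hr

end Residues

section Deletions

theorem BGraph.ext {G G' : BGraph} (hA : G.A = G'.A) (hB : G.B = G'.B)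
    (hadj : ∀ x y, G.Adj x y ↔ G'.Adj x y) : G = G' := by
  obtain ⟨A, B, finA, finB, Adj, symm⟩ := G
  obtain ⟨A', B', finA', finB', Adj', symm'⟩ := G'
  obtain rfl : Adj = Adj' := by
    ext x y
    exact hadj x y
  cases hA
  cases hB
  rfl

/-- The graph `G` without the edges in `s`, the counterpart of `SimpleGraph.deleteEdges`. -/
def deleteEdges (G : BGraph) (s : Set (Sym2 ℕ)) : BGraph where
  A := G.A
  B := G.B
  finA := G.finA
  finB := G.finB
  Adj x y := G.Adj x y ∧ s(x, y) ∉ s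
  symm x y h := ⟨G.symm x y h.1, Sym2.eq_swap (a := x) ▸ h.2⟩

/-- The operations deleting the given pairs of vertices one after the other. -/
def delOps (es : List (ℕ × ℕ)) : List Op := es.map fun e => Op.del e.1 e.2

/-- The unordered pairs underlying a list of ordered ones; an edge deletion `Op.del u v` depends on
the order of `u` and `v`, its effect only on `s(u, v)`. -/
def edges (es : List (ℕ × ℕ)) : List (Sym2 ℕ) := es.map fun e => s(e.1, e.2)

variable {sA sB : Bool} {G G' : BGraph} {L : List Op}

theorem deleteEdges_deleteEdges (s t : Set (Sym2 ℕ)) :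
    deleteEdges (deleteEdges G s) t = deleteEdges G (s ∪ t) :=
  BGraph.ext rfl rfl fun x y => by simp [deleteEdges, and_assoc]

theorem opStep_del_iff {u v : ℕ} :
    OpStep sA sB (Op.del u v) G G' ↔ G.Adj u v ∧ G' = deleteEdges G {s(u, v)} := by
  constructor
  · rintro ⟨huv, hA, hB, hadj⟩
    exact ⟨huv, BGraph.ext hA hB fun x y => by simp [hadj, deleteEdges]⟩
  · rintro ⟨huv, rfl⟩
    exact .del huv rfl rfl fun x y => by simp [deleteEdges]

theorem applySeq_delOps_iff {es : List (ℕ × ℕ)} :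
    ApplySeq sA sB (delOps es) G G' ↔
      (∀ e ∈ es, G.Adj e.1 e.2) ∧ (edges es).Nodup ∧ G' = deleteEdges G {e | e ∈ edges es} := by
  induction es generalizing G with
  | nil => simp [delOps, edges, ApplySeq, deleteEdges]
  | cons e es ih =>
    have hcons : {f | f ∈ edges (e :: es)} = {s(e.1, e.2)} ∪ {f | f ∈ edges es} := by
      ext f
      simp [edges]
    have hadj : (∀ f ∈ es, (deleteEdges G {s(e.1, e.2)}).Adj f.1 f.2) ↔
        (∀ f ∈ es, G.Adj f.1 f.2) ∧ s(e.1, e.2) ∉ edges es := by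
      simp only [deleteEdges, edges, Set.mem_singleton_iff, List.mem_map, not_exists, not_and,
        ← forall_and]
    have hstep : ApplySeq sA sB (delOps (e :: es)) G G' ↔
        G.Adj e.1 e.2 ∧ ApplySeq sA sB (delOps es) (deleteEdges G {s(e.1, e.2)}) G' := by
      simp only [delOps, List.map_cons, ApplySeq, opStep_del_iff, and_assoc, exists_and_left,
        exists_eq_left]
    have hnodup : (edges (e :: es)).Nodup ↔ s(e.1, e.2) ∉ edges es ∧ (edges es).Nodup :=
      List.nodup_cons
    rw [hstep, ih, hadj, hnodup, hcons, deleteEdges_deleteEdges, List.forall_mem_cons]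
    tauto

theorem solves_delOps_iff {es : List (ℕ × ℕ)} :
    Solves sA sB (delOps es) G ↔ (∀ e ∈ es, G.Adj e.1 e.2) ∧ (edges es).Nodup ∧
      IsBicliqueUnion (deleteEdges G {e | e ∈ edges es}) := by
  simp only [Solves, applySeq_delOps_iff, and_assoc, exists_and_left, exists_eq_left]

theorem mk_mem_edges_iff {es : List (ℕ × ℕ)} {u v : ℕ} :
    s(u, v) ∈ edges es ↔ Op.del u v ∈ delOps es ∨ Op.del v u ∈ delOps es := by
  simp only [edges, delOps, List.mem_map, Sym2.eq_iff, Op.del.injEq, and_or_left, exists_or]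

theorem exists_eq_delOps_iff :
    (∃ es, L = delOps es) ↔ ∀ op ∈ L, ∃ u v, op = Op.del u v := by
  constructor
  · rintro ⟨es, rfl⟩ op hop
    obtain ⟨⟨u, v⟩, -, rfl⟩ := List.mem_map.1 hop
    exact ⟨u, v, rfl⟩
  · intro h
    have hL : L ∈ Set.range (List.map fun e : ℕ × ℕ => Op.del e.1 e.2) := by
      rw [Set.range_list_map]
      intro op hop
      obtain ⟨u, v, rfl⟩ := h op hop
      exact ⟨(u, v), rfl⟩
    obtain ⟨es, rfl⟩ := hL
    exact ⟨es, rfl⟩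

theorem exists_eq_delOps_and_edges_eq_iff {ι : Type*} {I : Finset ι} {x y : ι → ℕ} :
    (∃ es, L = delOps es ∧ (edges es).toFinset = I.image fun i => s(x i, y i)) ↔
      (∀ i ∈ I, Op.del (x i) (y i) ∈ L ∨ Op.del (y i) (x i) ∈ L) ∧
        ∀ op ∈ L, ∃ i ∈ I, op = Op.del (x i) (y i) ∨ op = Op.del (y i) (x i) := by
  constructor
  · rintro ⟨es, rfl, h⟩
    have hmem (e : Sym2 ℕ) : e ∈ edges es ↔ ∃ i ∈ I, s(x i, y i) = e := by
      rw [← List.mem_toFinset, h, mem_image]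
    refine ⟨fun i hi => mk_mem_edges_iff.1 ((hmem _).2 ⟨i, hi, rfl⟩), fun op hop => ?_⟩
    obtain ⟨u, v, rfl⟩ := exists_eq_delOps_iff.1 ⟨es, rfl⟩ op hop
    obtain ⟨i, hi, h⟩ := (hmem _).1 (mk_mem_edges_iff.2 (Or.inl hop))
    refine ⟨i, hi, ?_⟩
    simpa [eq_comm] using h
  · rintro ⟨hI, hL⟩
    obtain ⟨es, rfl⟩ := exists_eq_delOps_iff.2 fun op hop => by
      obtain ⟨i, -, h | h⟩ := hL op hop <;> exact ⟨_, _, h⟩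
    refine ⟨es, rfl, ?_⟩
    ext e
    rw [List.mem_toFinset, mem_image]
    constructor
    · intro he
      obtain ⟨⟨u, v⟩, huv, rfl⟩ := List.mem_map.1 he
      obtain ⟨i, hi, h⟩ := hL _ (List.mem_map_of_mem huv)
      exact ⟨i, hi, by simpa [eq_comm] using h⟩
    · rintro ⟨i, hi, rfl⟩
      exact mk_mem_edges_iff.2 (hI i hi)

end Deletions

section Cycle

/-- The edge joining `q i` to its successor in a cyclic enumeration `q`. -/
def cycleEdge {m : ℕ} (q : ZMod m → ℕ) (i : ZMod m) : Sym2 ℕ := s(q i, q (i + 1))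

/-- `G` is the cycle whose consecutive vertices are the values of `q`. This is `IsCycleWith`
without the sides and with the indices in `ZMod m`. -/
structure IsCyclicEnum {m : ℕ} (G : BGraph) (q : ZMod m → ℕ) : Prop where
  injective : Function.Injective q
  mem_verts : ∀ i, q i ∈ verts G
  adj_iff : ∀ x y, G.Adj x y ↔ s(x, y) ∈ Set.range (cycleEdge q)

variable {m : ℕ} {G : BGraph} {q : ZMod m → ℕ}

theorem cycleEdge_injective (hm : 2 < m) (hq : Function.Injective q) :
    Function.Injective (cycleEdge q) := by
  have h2 : (2 : ZMod m) ≠ 0 := natCast_ne_zero two_ne_zero hm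
  intro i j hij
  rcases Sym2.eq_iff.1 hij with ⟨h, -⟩ | ⟨h, h'⟩
  · exact hq h
  · exact absurd (by linear_combination hq h' - hq h) h2

theorem IsCyclicEnum.adj_add_one (C : IsCyclicEnum G q) (i : ZMod m) : G.Adj (q i) (q (i + 1)) :=
  (C.adj_iff _ _).2 ⟨i, rfl⟩

theorem IsCyclicEnum.adj_left_iff (C : IsCyclicEnum G q) {i : ZMod m} {y : ℕ} :
    G.Adj (q i) y ↔ y = q (i + 1) ∨ y = q (i - 1) := by
  constructor
  · rw [C.adj_iff]
    rintro ⟨j, hj⟩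
    rcases Sym2.eq_iff.1 hj with ⟨h, rfl⟩ | ⟨rfl, h⟩
    · exact Or.inl (by rw [C.injective h])
    · exact Or.inr (by rw [← C.injective h, add_sub_cancel_right])
  · rintro (rfl | rfl)
    · exact C.adj_add_one i
    · refine G.symm _ _ ?_
      simpa using C.adj_add_one (i - 1)

theorem IsCyclicEnum.exists_eq_of_adj (C : IsCyclicEnum G q) {x y : ℕ} (h : G.Adj x y) :
    ∃ i, x = q i := by
  obtain ⟨i, hi⟩ := (C.adj_iff x y).1 h
  rcases Sym2.eq_iff.1 hi with ⟨rfl, -⟩ | ⟨-, rfl⟩ <;> exact ⟨_, rfl⟩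

theorem IsCyclicEnum.not_adj_add_three (hm : 4 < m) (C : IsCyclicEnum G q) (i : ZMod m) :
    ¬ G.Adj (q i) (q (i + 3)) := by
  have h2 : (2 : ZMod m) ≠ 0 := natCast_ne_zero (n := 2) two_ne_zero (by omega)
  have h4 : (4 : ZMod m) ≠ 0 := natCast_ne_zero four_ne_zero hm
  rw [C.adj_left_iff]
  rintro (h | h)
  · exact h2 (by linear_combination C.injective h)
  · exact h4 (by linear_combination C.injective h)

/-- A walk of length three in a cycle either turns back on itself, and then closes up, or
traverses a window of three consecutive edges. -/
theorem IsCyclicEnum.isBicliqueUnion_deleteEdges_iff (hm : 4 < m) (C : IsCyclicEnum G q)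
    {s : Set (Sym2 ℕ)} : IsBicliqueUnion (deleteEdges G s) ↔
      ∀ i, cycleEdge q i ∈ s ∨ cycleEdge q (i + 1) ∈ s ∨ cycleEdge q (i + 2) ∈ s := by
  constructor
  · intro h i
    by_contra! hi
    have hkeep {j} (hj : cycleEdge q j ∉ s) : (deleteEdges G s).Adj (q j) (q (j + 1)) :=
      ⟨C.adj_add_one j, hj⟩
    have h1 := hkeep hi.2.1
    have h2 := hkeep hi.2.2
    rw [show i + 1 + 1 = i + 2 by ring] at h1
    rw [show i + 2 + 1 = i + 3 by ring] at h2
    exact C.not_adj_add_three hm i (h _ _ _ _ (hkeep hi.1) h1 h2).1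
  · intro hs
    have hwindow (i) (h0 : (deleteEdges G s).Adj (q i) (q (i + 1)))
        (h1 : (deleteEdges G s).Adj (q (i + 1)) (q (i + 1 + 1)))
        (h2 : (deleteEdges G s).Adj (q (i + 1 + 1)) (q (i + 1 + 1 + 1))) : False := by
      have := hs i
      rw [show i + 2 = i + 1 + 1 by ring] at this
      exact this.elim h0.2 (Or.elim · h1.2 h2.2)
    intro a b c d hab hbc hcd
    obtain ⟨i, rfl⟩ := C.exists_eq_of_adj hab.1
    rcases C.adj_left_iff.1 hab.1 with rfl | rfl <;>
      rcases C.adj_left_iff.1 hbc.1 with rfl | rfl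
    · rcases C.adj_left_iff.1 hcd.1 with rfl | rfl
      · exact (hwindow i hab hbc hcd).elim
      · simpa using hab
    · simpa using hcd
    · simpa using hcd
    · rcases C.adj_left_iff.1 hcd.1 with rfl | rfl
      · simpa using hab
      · refine (hwindow (i - 1 - 1 - 1) ?_ ?_ ?_).elim <;>
          simp only [sub_add_cancel] <;> exact (deleteEdges G s).symm _ _ ‹_›

theorem IsCycleWith.isCyclicEnum [NeZero m] {p : ℕ → ℕ} (h : IsCycleWith G p m) :
    IsCyclicEnum G fun i : ZMod m => p i.val := by
  obtain ⟨hinj, hA, hB, hadj⟩ := h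
  have hsucc (i : ZMod m) : (i + 1).val = (i.val + 1) % m := by
    rw [← ZMod.val_natCast, Nat.cast_add_one, ZMod.natCast_zmod_val]
  refine ⟨fun i j hij => ZMod.val_injective m (hinj _ _ i.val_lt j.val_lt hij), fun i => ?_,
    fun x y => ?_⟩
  · rcases Nat.mod_two_eq_zero_or_one i.val with h | h
    · exact Or.inl (hA ▸ ⟨_, ⟨i.val_lt, h⟩, rfl⟩)
    · exact Or.inr (hB ▸ ⟨_, ⟨i.val_lt, h⟩, rfl⟩)
  · rw [hadj]
    simp only [Set.mem_range, cycleEdge, hsucc, Sym2.eq_iff]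
    constructor
    · rintro ⟨n, hn, h⟩
      refine ⟨n, ?_⟩
      rw [ZMod.val_natCast_of_lt hn]
      tauto
    · rintro ⟨i, h⟩
      refine ⟨i.val, i.val_lt, ?_⟩
      tauto

end Cycle

section Obstructions

/-- A bound on the number of indices `i` for which the operation destroys the obstruction at `i`
in the sense of `HasObstruction`; only deletions attain the value `3`. -/
def Op.cost : Op → ℕ
  | Op.del _ _ => 3
  | Op.add _ _ => 2
  | Op.split _ _ _ _ => 2

/-- Every edge of `G` joins two vertices of `G`; the structure `BGraph` itself does not demand
this. -/
def EdgesInVerts (G : BGraph) : Prop := ∀ x y, G.Adj x y → x ∈ verts G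

/-- The graph `H`, obtained from a cycle of length `m` by editing operations, contains a walk with
nonadjacent ends whose vertices stem from the cycle vertices `i`, `i + 1`, `i + 2` and `i + 3`.
Here `π x` is the index of the cycle vertex from which `x` arose by splittings. -/
def HasObstruction {m : ℕ} (H : BGraph) (π : ℕ → ZMod m) (i : ZMod m) : Prop :=
  ∃ a b c d, (π a = i ∧ π b = i + 1 ∧ π c = i + 2 ∧ π d = i + 3) ∧
    H.Adj a b ∧ H.Adj b c ∧ H.Adj c d ∧ ¬ H.Adj a d

variable {m : ℕ} {sA sB : Bool} {H H' : BGraph} {π : ℕ → ZMod m} {i : ZMod m}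

theorem IsBicliqueUnion.not_hasObstruction (h : IsBicliqueUnion H) : ¬ HasObstruction H π i :=
  fun ⟨a, b, c, d, _, hab, hbc, hcd, had⟩ => had (h a b c d hab hbc hcd)

theorem exists_forall_eq_of_mk_eq (hm : 2 < m) (π : ℕ → ZMod m) (u v : ℕ) :
    ∃ j, ∀ x y, s(x, y) = s(u, v) → π y = π x + 1 → π x = j := by
  have h2 : (2 : ZMod m) ≠ 0 := natCast_ne_zero (n := 2) two_ne_zero hm
  by_cases huv : π v = π u + 1
  · refine ⟨π u, fun x y hxy h => ?_⟩
    rcases Sym2.eq_iff.1 hxy with ⟨rfl, -⟩ | ⟨rfl, rfl⟩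
    · rfl
    · exact absurd (by linear_combination - h - huv) h2
  · refine ⟨π v, fun x y hxy h => ?_⟩
    rcases Sym2.eq_iff.1 hxy with ⟨rfl, rfl⟩ | ⟨rfl, -⟩
    · exact absurd h huv
    · rfl

theorem exists_finset_hasObstruction_deleteEdges (hm : 2 < m) (π : ℕ → ZMod m) (u v : ℕ) :
    ∃ K : Finset (ZMod m), #K ≤ 3 ∧
      ∀ i ∉ K, HasObstruction H π i → HasObstruction (deleteEdges H {s(u, v)}) π i := by
  obtain ⟨j, hj⟩ := exists_forall_eq_of_mk_eq hm π u v
  refine ⟨{j, j - 1, j - 2}, card_le_three, ?_⟩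
  rintro i hi ⟨a, b, c, d, ⟨ha, hb, hc, hd⟩, hab, hbc, hcd, had⟩
  simp only [mem_insert, mem_singleton, not_or, eq_sub_iff_add_eq] at hi
  refine ⟨a, b, c, d, ⟨ha, hb, hc, hd⟩, ⟨hab, fun h => hi.1 ?_⟩, ⟨hbc, fun h => hi.2.1 ?_⟩,
    ⟨hcd, fun h => hi.2.2 ?_⟩, fun h => had h.1⟩
  · rw [← ha, hj a b h (by rw [ha, hb])]
  · rw [← hb, hj b c h (by rw [hb, hc]; ring)]
  · rw [← hc, hj c d h (by rw [hc, hd]; ring)]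

/-- The map sending each vertex present after the splitting of `v` into `v` and `v'` to the vertex
it comes from. -/
def unsplit (v v' : ℕ) : ℕ → ℕ := Function.update id v' v

theorem unsplit_self (v v' : ℕ) : unsplit v v' v' = v := Function.update_self ..

theorem unsplit_of_ne {v v' x : ℕ} (hx : x ≠ v') : unsplit v v' x = x :=
  Function.update_of_ne hx ..

namespace OpStep

theorem exists_finset_hasObstruction_of_add {u v : ℕ} (h : OpStep sA sB (Op.add u v) H H')
    (π : ℕ → ZMod m) :
    ∃ K : Finset (ZMod m), #K ≤ 2 ∧ ∀ i ∉ K, HasObstruction H π i → HasObstruction H' π i := by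
  obtain - | ⟨-, -, -, -, -, hadj⟩ := h
  refine ⟨{π u, π v}, card_le_two, ?_⟩
  rintro _ hi ⟨a, b, c, d, ⟨rfl, hπ⟩, hab, hbc, hcd, had⟩
  have hmono {x y} (h : H.Adj x y) : H'.Adj x y := (hadj x y).2 (Or.inl h)
  refine ⟨a, b, c, d, ⟨rfl, hπ⟩, hmono hab, hmono hbc, hmono hcd, fun h => hi ?_⟩
  rcases (hadj a d).1 h with h | ⟨rfl, -⟩ | ⟨rfl, -⟩
  · exact absurd h had
  · simp
  · simp

theorem adj_of_split {v v' : ℕ} {N₁ N₂ : Set ℕ} (h : OpStep sA sB (Op.split v v' N₁ N₂) H H')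
    (hH : EdgesInVerts H) {x y : ℕ} (hxy : H'.Adj x y) :
    H.Adj (unsplit v v' x) (unsplit v v' y) := by
  obtain - | - | ⟨hside, hfresh, hcover, -, -, hadj⟩ := h
  have hv : v ∈ verts H := hside.imp And.left And.left
  have hid {z} (hz : z ∈ verts H) := unsplit_of_ne (v := v) (ne_of_mem_of_not_mem hz hfresh)
  have hN₁ {z} (hz : z ∈ N₁) : H.Adj v z := hcover.subset (Or.inl hz)
  have hN₂ {z} (hz : z ∈ N₂) : H.Adj v z := hcover.subset (Or.inr hz)
  have hright {x y} (h : H.Adj x y) : y ∈ verts H := hH y x (H.symm _ _ h)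
  rcases (hadj x y).1 hxy with ⟨h, -, -⟩ | ⟨rfl, h⟩ | ⟨rfl, h⟩ | ⟨rfl, h⟩ | ⟨rfl, h⟩
  · rwa [hid (hH _ _ h), hid (hright h)]
  · rw [hid hv, hid (hright (hN₁ h))]
    exact hN₁ h
  · rw [hid hv, hid (hright (hN₁ h))]
    exact H.symm _ _ (hN₁ h)
  · rw [unsplit_self, hid (hright (hN₂ h))]
    exact hN₂ h
  · rw [unsplit_self, hid (hright (hN₂ h))]
    exact H.symm _ _ (hN₂ h)

theorem exists_adj_of_split {v v' : ℕ} {N₁ N₂ : Set ℕ}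
    (h : OpStep sA sB (Op.split v v' N₁ N₂) H H') (hH : EdgesInVerts H) {x y : ℕ}
    (hxy : H.Adj x y) (hy : y ≠ v) :
    ∃ x', unsplit v v' x' = x ∧ H'.Adj x' y := by
  obtain - | - | ⟨-, hfresh, hcover, -, -, hadj⟩ := h
  have hx := unsplit_of_ne (v := v) (ne_of_mem_of_not_mem (hH _ _ hxy) hfresh)
  by_cases hxv : x = v
  · subst hxv
    rcases hcover.superset hxy with h | h
    · exact ⟨x, hx, (hadj _ _).2 (by tauto)⟩
    · exact ⟨v', unsplit_self .., (hadj _ _).2 (by tauto)⟩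
  · exact ⟨x, hx, (hadj _ _).2 (Or.inl ⟨hxy, hxv, hy⟩)⟩

/-- Only an interior vertex of the walk loses an incident edge of it; an end vertex that is split is
replaced by the copy adjacent to its neighbour in the walk. -/
theorem exists_finset_hasObstruction_of_split {v v' : ℕ} {N₁ N₂ : Set ℕ}
    (h : OpStep sA sB (Op.split v v' N₁ N₂) H H') (hH : EdgesInVerts H) (π : ℕ → ZMod m) :
    ∃ K : Finset (ZMod m), #K ≤ 2 ∧ ∀ i ∉ K, HasObstruction H π i →
      HasObstruction H' (π ∘ unsplit v v') i := by
  refine ⟨{π v - 1, π v - 2}, card_le_two, ?_⟩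
  rintro i hi ⟨a, b, c, d, ⟨ha, hb, hc, hd⟩, hab, hbc, hcd, had⟩
  simp only [mem_insert, mem_singleton, not_or, eq_sub_iff_add_eq] at hi
  have hbv : b ≠ v := fun h => hi.1 (h ▸ hb.symm)
  have hcv : c ≠ v := fun h => hi.2 (h ▸ hc.symm)
  obtain ⟨a', ha', hab'⟩ := h.exists_adj_of_split hH hab hbv
  obtain ⟨d', hd', hdc'⟩ := h.exists_adj_of_split hH (H.symm _ _ hcd) hcv
  have had' : ¬ H'.Adj a' d' := fun h' => had <| by simpa [ha', hd'] using h.adj_of_split hH h'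
  obtain - | - | ⟨-, hfresh, -, -, -, hadj⟩ := h
  have hb' := unsplit_of_ne (v := v) (ne_of_mem_of_not_mem (hH _ _ hbc) hfresh)
  have hc' := unsplit_of_ne (v := v) (ne_of_mem_of_not_mem (hH _ _ hcd) hfresh)
  exact ⟨a', b, c, d', by simp [*], hab', (hadj b c).2 (Or.inl ⟨hbc, hbv, hcv⟩),
    H'.symm _ _ hdc', had'⟩

theorem verts_of_split {v v' : ℕ} {N₁ N₂ : Set ℕ}
    (h : OpStep sA sB (Op.split v v' N₁ N₂) H H') : verts H' = insert v' (verts H) := by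
  obtain - | - | ⟨⟨hv, -⟩ | ⟨hv, -⟩, -, -, hA, hB, -⟩ := h
  · simp [verts, hA hv, Set.insert_union]
  · simp [verts, hB hv, Set.union_insert]

theorem edgesInVerts {op : Op} (h : OpStep sA sB op H H') (hH : EdgesInVerts H) :
    EdgesInVerts H' := by
  intro x y hxy
  cases op with
  | del u v =>
    obtain ⟨-, rfl⟩ := opStep_del_iff.1 h
    exact hH x y hxy.1
  | add u v =>
    obtain - | ⟨hu, hv, -, hA, hB, hadj⟩ := h
    rw [verts, hA, hB]
    rcases (hadj x y).1 hxy with h | ⟨rfl, -⟩ | ⟨rfl, -⟩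
    · exact hH x y h
    · exact Or.inl hu
    · exact Or.inr hv
  | split v v' N₁ N₂ =>
    rw [h.verts_of_split, Set.mem_insert_iff, or_iff_not_imp_left]
    intro hx
    exact unsplit_of_ne hx ▸ hH _ _ (h.adj_of_split hH hxy)

theorem exists_finset_hasObstruction {op : Op} (h : OpStep sA sB op H H') (hm : 2 < m)
    (hH : EdgesInVerts H) (π : ℕ → ZMod m) :
    ∃ (π' : ℕ → ZMod m) (K : Finset (ZMod m)), #K ≤ op.cost ∧
      ∀ i ∉ K, HasObstruction H π i → HasObstruction H' π' i := by
  cases op with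
  | del u v =>
    obtain ⟨-, rfl⟩ := opStep_del_iff.1 h
    exact ⟨π, exists_finset_hasObstruction_deleteEdges hm π u v⟩
  | add u v => exact ⟨π, h.exists_finset_hasObstruction_of_add π⟩
  | split v v' N₁ N₂ => exact ⟨_, h.exists_finset_hasObstruction_of_split hH π⟩

end OpStep

theorem ApplySeq.exists_finset_hasObstruction {L : List Op} (h : ApplySeq sA sB L H H') (hm : 2 < m)
    (hH : EdgesInVerts H) (π : ℕ → ZMod m) :
    ∃ (π' : ℕ → ZMod m) (K : Finset (ZMod m)), #K ≤ (L.map Op.cost).sum ∧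
      ∀ i ∉ K, HasObstruction H π i → HasObstruction H' π' i := by
  induction L generalizing H π with
  | nil =>
    obtain rfl := h
    exact ⟨π, ∅, by simp⟩
  | cons op L ih =>
    obtain ⟨H₁, hstep, happly⟩ := h
    obtain ⟨π₁, K₁, hK₁, h₁⟩ := hstep.exists_finset_hasObstruction hm hH π
    obtain ⟨π', K, hK, h'⟩ := ih happly (hstep.edgesInVerts hH) π₁
    refine ⟨π', K₁ ∪ K, (card_union_le _ _).trans ?_, fun i hi hobs => ?_⟩
    · simpa using add_le_add hK₁ hK
    · rw [mem_union, not_or] at hi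
      exact h' i hi.2 (h₁ i hi.1 hobs)

theorem IsCyclicEnum.le_sum_cost {q : ZMod m → ℕ} (C : IsCyclicEnum H q) (hm : 4 < m)
    {L : List Op} (h : Solves sA sB L H) : m ≤ (L.map Op.cost).sum := by
  have : NeZero m := ⟨by omega⟩
  obtain ⟨H', happly, hH'⟩ := h
  have hverts : EdgesInVerts H := fun x y hxy => by
    obtain ⟨i, rfl⟩ := C.exists_eq_of_adj hxy
    exact C.mem_verts i
  have hobs (i) : HasObstruction H (Function.invFun q) i := by
    have hinv := Function.leftInverse_invFun C.injective
    refine ⟨_, _, _, _, ⟨hinv _, hinv _, hinv _, hinv _⟩, C.adj_add_one i, ?_, ?_,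
      C.not_adj_add_three hm i⟩
    · simpa [add_assoc, one_add_one_eq_two] using C.adj_add_one (i + 1)
    · simpa [add_assoc, two_add_one_eq_three] using C.adj_add_one (i + 2)
  obtain ⟨π', K, hK, h⟩ := happly.exists_finset_hasObstruction (by omega) hverts (Function.invFun q)
  have hKuniv : K = univ := eq_univ_of_forall fun i => by
    by_contra hi
    exact hH'.not_hasObstruction (h i hi (hobs i))
  rwa [hKuniv, card_univ, ZMod.card] at hK

theorem exists_eq_delOps_of_le_sum_cost {L : List Op}
    (h : 3 * L.length ≤ (L.map Op.cost).sum) : ∃ es, L = delOps es := by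
  have hcost (op : Op) : op.cost ≤ 3 := by
    cases op <;> simp [Op.cost]
  rw [exists_eq_delOps_iff]
  by_contra! hL
  obtain ⟨op, hop, hdel⟩ := hL
  have hlt : op.cost < 3 := by
    cases op with
    | del u v => exact absurd rfl (hdel u v)
    | add u v => simp [Op.cost]
    | split v v' N₁ N₂ => simp [Op.cost]
  have hsum : (L.map Op.cost).sum < (L.map fun _ => 3).sum :=
    List.sum_lt_sum _ _ (fun op _ => hcost op) ⟨op, hop, hlt⟩
  rw [List.map_const', List.sum_replicate, smul_eq_mul] at hsum
  omega

end Obstructions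

section Solutions

variable {l : ℕ} {sA sB : Bool} {G : BGraph} {q : ZMod (3 * l) → ℕ}

theorem IsCyclicEnum.solves_delOps_iff (C : IsCyclicEnum G q) (hl : 2 ≤ l) {es : List (ℕ × ℕ)}
    (hes : es.length ≤ l) : Solves sA sB (delOps es) G ↔
      ∃ r < 3, (edges es).toFinset = (residueClass l r).image (cycleEdge q) := by
  have : NeZero l := ⟨by omega⟩
  have hinj := cycleEdge_injective (by omega) C.injective
  have hlen : (edges es).length ≤ l := by rwa [edges, List.length_map]
  have hcard : #(edges es).toFinset ≤ l := (edges es).toFinset_card_le.trans hlen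
  have hadj : (∀ e ∈ es, G.Adj e.1 e.2) ↔
      ∀ e ∈ (edges es).toFinset, e ∈ Set.range (cycleEdge q) := by
    simp only [edges, List.mem_toFinset, List.forall_mem_map, C.adj_iff]
  have hwin : IsBicliqueUnion (deleteEdges G {e | e ∈ edges es}) ↔
      ∃ r < 3, (edges es).toFinset.preimage (cycleEdge q) hinj.injOn = residueClass l r := by
    rw [C.isBicliqueUnion_deleteEdges_iff (by omega), ← forall_window_iff_exists_eq_residueClass]
    · simp
    · rw [card_preimage]
      exact (card_filter_le _ _).trans hcard
  rw [BCE.solves_delOps_iff, hadj, hwin]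
  constructor
  · rintro ⟨hrange, -, r, hr, h⟩
    refine ⟨r, hr, ?_⟩
    rw [← h, image_preimage, filter_true_of_mem hrange]
  · rintro ⟨r, hr, h⟩
    refine ⟨?_, ?_, r, hr, ?_⟩
    · rw [h]
      exact fun e he => (mem_image.1 he).imp fun i hi => hi.2
    · have hcard' : #(edges es).toFinset = l := by
        rw [h, card_image_of_injective _ hinj, card_residueClass hr]
      rw [List.card_toFinset] at hcard'
      exact List.dedup_eq_self.1 ((edges es).dedup_sublist.eq_of_length_le (by omega))
    · ext i
      simp [h, hinj.eq_iff]

theorem IsCyclicEnum.solves_iff (C : IsCyclicEnum G q) (hl : 2 ≤ l) {L : List Op}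
    (hL : L.length ≤ l) : Solves sA sB L G ↔ ∃ r < 3, ∃ es, L = delOps es ∧
      (edges es).toFinset = (residueClass l r).image (cycleEdge q) := by
  have hlen {es} (h : L = delOps es) : es.length ≤ l := by simpa [h, delOps] using hL
  constructor
  · intro h
    have hcost : 3 * l ≤ (L.map Op.cost).sum := C.le_sum_cost (by omega) h
    obtain ⟨es, rfl⟩ := exists_eq_delOps_of_le_sum_cost (by omega : 3 * L.length ≤ _)
    obtain ⟨r, hr, hes⟩ := (C.solves_delOps_iff hl (hlen rfl)).1 h
    exact ⟨r, hr, es, rfl, hes⟩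
  · rintro ⟨r, hr, es, rfl, hes⟩
    exact (C.solves_delOps_iff hl (hlen rfl)).2 ⟨r, hr, hes⟩

end Solutions

theorem cycle_solutions_general {sA sB : Bool} {l : ℕ} (hl : 2 ≤ l) {G : BGraph} {p : ℕ → ℕ}
    (hcyc : IsCycleWith G p (3 * l)) {L : List Op} (hlen : L.length ≤ l) :
    Solves sA sB L G ↔
      ∃ r < 3,
        (∀ i < l,
          Op.del (p ((r + 3 * i) % (3 * l))) (p ((r + 3 * i + 1) % (3 * l))) ∈ L ∨
          Op.del (p ((r + 3 * i + 1) % (3 * l))) (p ((r + 3 * i) % (3 * l))) ∈ L) ∧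
        (∀ op ∈ L, ∃ i < l,
          op = Op.del (p ((r + 3 * i) % (3 * l))) (p ((r + 3 * i + 1) % (3 * l))) ∨
          op = Op.del (p ((r + 3 * i + 1) % (3 * l))) (p ((r + 3 * i) % (3 * l)))) := by
  have : NeZero (3 * l) := ⟨by omega⟩
  have hedge (n : ℕ) : cycleEdge (fun i : ZMod (3 * l) => p i.val) n =
      s(p (n % (3 * l)), p ((n + 1) % (3 * l))) := by
    rw [cycleEdge, ← Nat.cast_add_one, ZMod.val_natCast, ZMod.val_natCast]
  simp only [hcyc.isCyclicEnum.solves_iff hl hlen, residueClass, image_image, Function.comp_def,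
    hedge, exists_eq_delOps_and_edges_eq_iff, mem_range]

/-- For `k ≥ 2`, the sequences of exactly `2k` operations
transforming `C_{6k}` (with consecutive vertices `p 0, …, p (6k-1)`, `p i`
being the paper's `v_{i+1}`) into a disjoint union of bicliques are exactly
the three sequences of edge deletions: for some `r ∈ {0, 1, 2}`, delete the
edges `v_{1+3i+r} v_{2+3i+r} = p ((r+3i) % 6k) p ((r+3i+1) % 6k)` for every
`0 ≤ i ≤ 2k - 1`. -/
theorem cycle_solutions (k : ℕ) (hk : 2 ≤ k) (G : BGraph) (p : ℕ → ℕ)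
    (hcyc : IsCycleWith G p (6 * k)) (L : List Op) (hlen : L.length = 2 * k) :
    Solves true true L G ↔
      ∃ r < 3,
        (∀ i < 2 * k,
          Op.del (p ((r + 3 * i) % (6 * k))) (p ((r + 3 * i + 1) % (6 * k))) ∈ L ∨
          Op.del (p ((r + 3 * i + 1) % (6 * k))) (p ((r + 3 * i) % (6 * k))) ∈ L) ∧
        (∀ op ∈ L, ∃ i < 2 * k,
          op = Op.del (p ((r + 3 * i) % (6 * k))) (p ((r + 3 * i + 1) % (6 * k))) ∨
          op = Op.del (p ((r + 3 * i + 1) % (6 * k))) (p ((r + 3 * i) % (6 * k)))) := by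
  rw [show 6 * k = 3 * (2 * k) by ring] at hcyc ⊢
  exact cycle_solutions_general (by omega) hcyc hlen.le

end BCE
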